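/- Let V : R^n → R be a 1-Lipschitz function and Z a standard Gaussian vector in R^n. Then for every t ≥ 0, P(V(Z) ≥ E[V(Z)] + t) ≤ exp(−t²/2). -/

import Mathlib

open MeasureTheory ProbabilityTheory
open scoped ENNReal

/-- The one-dimensional Brunn-Minkowski inequality. -/
theorem volume_add_volume_le_of_add_mem {A B C : Set ℝ} (hA : MeasurableSet A)
    (hB : MeasurableSet B) (hA' : A.Nonempty) (hB' : B.Nonempty)
    (h : ∀ x ∈ A, ∀ y ∈ B, x + y ∈ C) : volume A + volume B ≤ volume C := by
  have key : ∀ K L : Set ℝ, IsCompact K → IsCompact L → K.Nonempty → L.Nonempty → K ⊆ A → L ⊆ B →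
      volume K + volume L ≤ volume C := by
    intro K L hK hL hK' hL' hKA hLB
    have hm := hK.sSup_mem hK'
    have hk := hL.sInf_mem hL'
    set m := sSup K
    set k := sInf L
    have hd : AEDisjoint volume ((fun x => x + k) '' K) ((fun y => m + y) '' L) := by
      refine measure_mono_null (t := {m + k}) ?_ (by simp)
      rintro _ ⟨⟨x, hx, rfl⟩, y, hy, hxy⟩
      have h1 : x ≤ m := le_csSup hK.bddAbove hx
      have h2 : k ≤ y := csInf_le hL.bddBelow hy
      simp only [Set.mem_singleton_iff] at *
      linarith
    calc volume K + volume L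
        = volume ((fun x => x + k) '' K) + volume ((fun y => m + y) '' L) := by
          simp
      _ = volume ((fun x => x + k) '' K ∪ (fun y => m + y) '' L) :=
          (measure_union₀ (hL.image (by fun_prop)).measurableSet.nullMeasurableSet hd).symm
      _ ≤ volume C := by
          refine measure_mono (Set.union_subset ?_ ?_)
          · rintro _ ⟨x, hx, rfl⟩
            exact h x (hKA hx) k (hLB hk)
          · rintro _ ⟨y, hy, rfl⟩
            exact h m (hKA hm) y (hLB hy)
  have hsup : ∀ {D : Set ℝ}, MeasurableSet D →
      volume D ≤ ⨆ K : {K : Set ℝ // IsCompact K ∧ K.Nonempty ∧ K ⊆ D}, volume K.1 := by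
    intro D hD
    refine le_of_forall_lt fun r hr => ?_
    obtain ⟨K, hKD, hK, hrK⟩ := hD.exists_lt_isCompact hr
    have hK' : K.Nonempty := nonempty_of_measure_ne_zero (pos_of_gt hrK).ne'
    exact hrK.trans_le (le_iSup (fun K : {K : Set ℝ // IsCompact K ∧ K.Nonempty ∧ K ⊆ D} =>
      volume K.1) ⟨K, hK, hK', hKD⟩)
  have hne : ∀ {D : Set ℝ}, D.Nonempty →
      Nonempty {K : Set ℝ // IsCompact K ∧ K.Nonempty ∧ K ⊆ D} := fun ⟨x, hx⟩ =>
    ⟨{x}, isCompact_singleton, Set.singleton_nonempty x, Set.singleton_subset_iff.2 hx⟩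
  have := hne hA'
  have := hne hB'
  exact (add_le_add (hsup hA) (hsup hB)).trans (ENNReal.iSup_add_iSup_le fun K L =>
    key K.1 L.1 K.2.1 L.2.1 K.2.2.1 L.2.2.1 K.2.2.2 L.2.2.2)

/-- The weighted AM-GM inequality in `ℝ≥0∞`. -/
theorem geom_mean_le_arith_mean_ennreal {a b : ℝ} (ha : 0 < a) (hb : 0 < b) (hab : a + b = 1)
    (x y : ℝ≥0∞) : x ^ a * y ^ b ≤ ENNReal.ofReal a * x + ENNReal.ofReal b * y := by
  by_cases hx : x = ∞
  · simp [hx, ENNReal.mul_top, ha]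
  by_cases hy : y = ∞
  · simp [hy, ENNReal.mul_top, hb]
  lift x to NNReal using hx
  lift y to NNReal using hy
  have := NNReal.geom_mean_le_arith_mean2_weighted ⟨a, ha.le⟩ ⟨b, hb.le⟩ x y
    (by ext; exact hab)
  rw [← ENNReal.coe_rpow_of_nonneg _ ha.le, ← ENNReal.coe_rpow_of_nonneg _ hb.le,
    ENNReal.ofReal_eq_coe_nnreal ha.le, ENNReal.ofReal_eq_coe_nnreal hb.le]
  exact_mod_cast this

/-- The additive form of the one-dimensional Prékopa-Leindler inequality, for functions with
supremum one. -/
theorem lintegral_add_le_of_sup_one {a b : ℝ} (ha : 0 < a) (hb : 0 < b) (hab : a + b = 1)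
    {f g h : ℝ → ℝ} (hf : Measurable f) (hg : Measurable g) (hh : Measurable h)
    (hf0 : ∀ x, 0 ≤ f x) (hg0 : ∀ x, 0 ≤ g x) (hh0 : ∀ x, 0 ≤ h x)
    (hf1 : ∀ x, f x ≤ 1) (hg1 : ∀ x, g x ≤ 1)
    (hfs : ∀ t < 1, ∃ x, t < f x) (hgs : ∀ t < 1, ∃ x, t < g x)
    (hfg : ∀ x y, f x ^ a * g y ^ b ≤ h (a * x + b * y)) :
    ENNReal.ofReal a * (∫⁻ x, ENNReal.ofReal (f x)) +
      ENNReal.ofReal b * (∫⁻ x, ENNReal.ofReal (g x)) ≤ ∫⁻ x, ENNReal.ofReal (h x) := by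
  rw [lintegral_eq_lintegral_meas_lt volume (.of_forall hf0) hf.aemeasurable,
    lintegral_eq_lintegral_meas_lt volume (.of_forall hg0) hg.aemeasurable,
    lintegral_eq_lintegral_meas_lt volume (.of_forall hh0) hh.aemeasurable]
  refine (add_le_add (lintegral_const_mul_le _ _) (lintegral_const_mul_le _ _)).trans ?_
  refine (le_lintegral_add _ _).trans (setLIntegral_mono' measurableSet_Ioi fun t ht => ?_)
  rw [Set.mem_Ioi] at ht
  rcases lt_or_ge t 1 with h1 | h1
  · have hvol : ∀ {c : ℝ} (_ : 0 < c) (s : Set ℝ),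
        ENNReal.ofReal c * volume s = volume ((fun x => c * x) '' s) := by
      intro c hc s
      have := Measure.addHaar_smul (volume : Measure ℝ) c s
      simp only [Module.finrank_self, pow_one, abs_of_pos hc] at this
      rw [← this]
      rfl
    rw [hvol ha, hvol hb]
    have hms : ∀ {c : ℝ} (_ : 0 < c) {s : Set ℝ}, MeasurableSet s →
        MeasurableSet ((fun x => c * x) '' s) := fun {c} hc s hs =>
      (measurableEmbedding_mulLeft₀ hc.ne').measurableSet_image.2 hs
    refine volume_add_volume_le_of_add_mem (hms ha (measurableSet_lt measurable_const hf))
      (hms hb (measurableSet_lt measurable_const hg)) (Set.Nonempty.image _ (hfs t h1))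
      (Set.Nonempty.image _ (hgs t h1)) ?_
    rintro _ ⟨x, hx, rfl⟩ _ ⟨y, hy, rfl⟩
    refine lt_of_lt_of_le ?_ (hfg x y)
    calc t = t ^ a * t ^ b := by rw [← Real.rpow_add ht, hab, Real.rpow_one]
      _ < f x ^ a * g y ^ b :=
        mul_lt_mul'' (Real.rpow_lt_rpow ht.le hx ha) (Real.rpow_lt_rpow ht.le hy hb)
          (by positivity) (by positivity)
  · have e1 : {x | t < f x} = ∅ := by ext x; simpa using (hf1 x).trans h1
    have e2 : {x | t < g x} = ∅ := by ext x; simpa using (hg1 x).trans h1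
    simp [e1, e2]

/-- The one-dimensional Prékopa-Leindler inequality for bounded functions. -/
theorem prekopa_leindler_real_of_bounded {a b : ℝ} (ha : 0 < a) (hb : 0 < b) (hab : a + b = 1)
    {f g h : ℝ → ℝ≥0∞} (hf : Measurable f) (hg : Measurable g) (hh : Measurable h)
    {M : ℝ≥0∞} (hM : M ≠ ∞) (hfM : ∀ x, f x ≤ M) (hgM : ∀ x, g x ≤ M)
    (hfg : ∀ x y, f x ^ a * g y ^ b ≤ h (a * x + b * y)) :
    (∫⁻ x, f x) ^ a * (∫⁻ x, g x) ^ b ≤ ∫⁻ x, h x := by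
  rcases eq_or_ne (⨆ x, f x) 0 with hS0 | hS0
  · have : ∀ x, f x = 0 := by simpa using hS0
    simp [this, ha]
  rcases eq_or_ne (⨆ x, g x) 0 with hT0 | hT0
  · have : ∀ x, g x = 0 := by simpa using hT0
    simp [this, hb]
  have hSt : (⨆ x, f x) ≠ ∞ := ne_top_of_le_ne_top hM (iSup_le hfM)
  have hTt : (⨆ x, g x) ≠ ∞ := ne_top_of_le_ne_top hM (iSup_le hgM)
  have hfS : ∀ x, f x ≤ ⨆ x, f x := le_iSup f
  have hgT : ∀ x, g x ≤ ⨆ x, g x := le_iSup g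
  have hSs : ∀ t < ⨆ x, f x, ∃ x, t < f x := fun t ht => lt_iSup_iff.1 ht
  have hTs : ∀ t < ⨆ x, g x, ∃ x, t < g x := fun t ht => lt_iSup_iff.1 ht
  generalize (⨆ x, f x) = S at *
  generalize (⨆ x, g x) = T at *
  have norm_le : ∀ {u : ℝ → ℝ≥0∞} {U : ℝ≥0∞}, (∀ x, u x ≤ U) → ∀ x, u x / U ≤ 1 :=
    fun hu x => ENNReal.div_le_of_le_mul (by simpa using hu x)
  have norm_sup : ∀ {u : ℝ → ℝ≥0∞} {U : ℝ≥0∞}, U ≠ 0 → U ≠ ∞ → (∀ x, u x ≤ U) →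
      (∀ t < U, ∃ x, t < u x) → ∀ t < (1 : ℝ), ∃ x, t < (u x / U).toReal := by
    intro u U hU hU' huU hu t ht
    obtain ⟨x, hx⟩ := hu (ENNReal.ofReal t * U) (by
      conv_rhs => rw [← one_mul U]
      exact ENNReal.mul_lt_mul_left hU hU' (by simpa using ht))
    refine ⟨x, ?_⟩
    have hfin : u x / U ≠ ∞ := ne_top_of_le_ne_top ENNReal.one_ne_top (norm_le huU x)
    have hlt : ENNReal.ofReal t < u x / U :=
      (ENNReal.lt_div_iff_mul_lt (.inl hU) (.inl hU')).2 hx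
    rw [← ENNReal.ofReal_toReal hfin] at hlt
    exact (ENNReal.ofReal_lt_ofReal_iff'.1 hlt).1
  have hc0 : S ^ a * T ^ b ≠ 0 := by
    simp [hS0, hT0, hSt, hTt]
  have hct : S ^ a * T ^ b ≠ ∞ := by finiteness
  have key := lintegral_add_le_of_sup_one ha hb hab (f := fun x => (f x / S).toReal)
    (g := fun x => (g x / T).toReal) (h := fun x => (min (h x / (S ^ a * T ^ b)) 1).toReal)
    (by fun_prop) (by fun_prop) (by fun_prop)
    (fun _ => ENNReal.toReal_nonneg) (fun _ => ENNReal.toReal_nonneg)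
    (fun _ => ENNReal.toReal_nonneg)
    (fun x => ENNReal.toReal_le_of_le_ofReal zero_le_one (by simpa using norm_le hfS x))
    (fun x => ENNReal.toReal_le_of_le_ofReal zero_le_one (by simpa using norm_le hgT x))
    (norm_sup hS0 hSt hfS hSs) (norm_sup hT0 hTt hgT hTs) (by
      intro x y
      rw [ENNReal.toReal_rpow, ENNReal.toReal_rpow, ← ENNReal.toReal_mul]
      refine ENNReal.toReal_mono (by simp) (le_min ?_ ?_)
      · rw [ENNReal.div_rpow_of_nonneg _ _ ha.le, ENNReal.div_rpow_of_nonneg _ _ hb.le,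
          ← ENNReal.mul_div_mul_comm (by simp [hSt, hS0]) (by simp [hSt, hS0])]
        exact ENNReal.div_le_div_right (hfg x y) _
      · exact mul_le_one' (ENNReal.rpow_le_one (norm_le hfS x) ha.le)
          (ENNReal.rpow_le_one (norm_le hgT y) hb.le))
  have hfin : ∀ x, min (h x / (S ^ a * T ^ b)) 1 ≠ ∞ := fun x => by simp
  simp only [ENNReal.ofReal_toReal (ne_top_of_le_ne_top ENNReal.one_ne_top (norm_le hfS _)),
    ENNReal.ofReal_toReal (ne_top_of_le_ne_top ENNReal.one_ne_top (norm_le hgT _)),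
    ENNReal.ofReal_toReal (hfin _)] at key
  have key2 := ((geom_mean_le_arith_mean_ennreal ha hb hab _ _).trans key).trans
    (lintegral_mono (g := fun x => h x / (S ^ a * T ^ b)) fun x => min_le_left _ _)
  simp only [div_eq_mul_inv] at key2
  rw [lintegral_mul_const _ hf, lintegral_mul_const _ hg, lintegral_mul_const _ hh,
    ← div_eq_mul_inv, ← div_eq_mul_inv, ← div_eq_mul_inv,
    ENNReal.div_rpow_of_nonneg _ _ ha.le, ENNReal.div_rpow_of_nonneg _ _ hb.le,
    ← ENNReal.mul_div_mul_comm (by simp [hSt, hS0]) (by simp [hSt, hS0])] at key2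
  rwa [ENNReal.div_le_iff hc0 hct, ENNReal.div_mul_cancel hc0 hct] at key2

/-- The one-dimensional Prékopa-Leindler inequality. -/
theorem prekopa_leindler_real {a b : ℝ} (ha : 0 < a) (hb : 0 < b) (hab : a + b = 1)
    {f g h : ℝ → ℝ≥0∞} (hf : Measurable f) (hg : Measurable g) (hh : Measurable h)
    (hfg : ∀ x y, f x ^ a * g y ^ b ≤ h (a * x + b * y)) :
    (∫⁻ x, f x) ^ a * (∫⁻ x, g x) ^ b ≤ ∫⁻ x, h x := by
  have trunc : ∀ {u : ℝ → ℝ≥0∞}, Measurable u → ∀ {c : ℝ}, 0 ≤ c → Filter.Tendsto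
      (fun n : ℕ => (∫⁻ x, min (u x) n) ^ c) Filter.atTop (nhds ((∫⁻ x, u x) ^ c)) := by
    intro u hu c hc
    refine (ENNReal.continuous_rpow_const.tendsto _).comp ?_
    refine lintegral_tendsto_of_tendsto_of_monotone (fun n => by fun_prop)
      (.of_forall fun x m n hmn => by dsimp; gcongr) (.of_forall fun x => ?_)
    simpa using (tendsto_const_nhds (x := u x)).min ENNReal.tendsto_nat_nhds_top
  rcases eq_or_ne (∫⁻ x, f x) 0 with hf0 | hf0
  · simp [hf0, ha]
  rcases eq_or_ne (∫⁻ x, g x) 0 with hg0 | hg0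
  · simp [hg0, hb]
  refine le_of_tendsto' (ENNReal.Tendsto.mul (trunc hf ha.le) (.inl (by simp [hf0, ha.le]))
    (trunc hg hb.le) (.inl (by simp [hg0, hb.le]))) fun n => ?_
  refine prekopa_leindler_real_of_bounded ha hb hab (by fun_prop) (by fun_prop) hh
    (ENNReal.natCast_ne_top n) (fun x => min_le_right _ _) (fun x => min_le_right _ _)
    fun x y => le_trans ?_ (hfg x y)
  gcongr <;> exact min_le_left _ _

/-- The Prékopa-Leindler inequality relative to the standard Gaussian measure on `ℝ`. -/
theorem gaussianReal_infConv {a b : ℝ} (ha : 0 < a) (hb : 0 < b) (hab : a + b = 1)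
    {f g : ℝ → ℝ≥0∞} (hf : Measurable f) (hg : Measurable g)
    (hfg : ∀ x y, f x ^ a * g y ^ b * ENNReal.ofReal (Real.exp (-(a * b / 2 * (x - y) ^ 2))) ≤ 1) :
    (∫⁻ x, f x ∂gaussianReal 0 1) ^ a * (∫⁻ x, g x ∂gaussianReal 0 1) ^ b ≤ 1 := by
  have hd : ∀ {u : ℝ → ℝ≥0∞}, Measurable u →
      ∫⁻ x, u x ∂gaussianReal 0 1 = ∫⁻ x, gaussianPDF 0 1 x * u x := fun {u} hu => by
    rw [gaussianReal_of_var_ne_zero _ one_ne_zero,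
      lintegral_withDensity_eq_lintegral_mul _ (measurable_gaussianPDF _ _) hu]
    rfl
  rw [hd hf, hd hg, ← lintegral_gaussianPDF_eq_one 0 one_ne_zero]
  refine prekopa_leindler_real ha hb hab ((measurable_gaussianPDF _ _).mul hf)
    ((measurable_gaussianPDF _ _).mul hg) (measurable_gaussianPDF _ _) fun x y => ?_
  have hpdf : gaussianPDF 0 1 x ^ a * gaussianPDF 0 1 y ^ b =
      gaussianPDF 0 1 (a * x + b * y) *
        ENNReal.ofReal (Real.exp (-(a * b / 2 * (x - y) ^ 2))) := by
    simp only [gaussianPDF]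
    rw [ENNReal.ofReal_rpow_of_nonneg (gaussianPDFReal_nonneg _ _ _) ha.le,
      ENNReal.ofReal_rpow_of_nonneg (gaussianPDFReal_nonneg _ _ _) hb.le,
      ← ENNReal.ofReal_mul (by have := gaussianPDFReal_nonneg 0 1 x; positivity),
      ← ENNReal.ofReal_mul (gaussianPDFReal_nonneg _ _ _)]
    congr 1
    simp only [gaussianPDFReal]
    have hc : (0 : ℝ) < (√(2 * Real.pi * (1 : NNReal)))⁻¹ := by
      have := Real.pi_pos
      simp only [NNReal.coe_one]; positivity
    set c := (√(2 * Real.pi * (1 : NNReal)))⁻¹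
    rw [Real.mul_rpow hc.le (Real.exp_pos _).le, Real.mul_rpow hc.le (Real.exp_pos _).le,
      ← Real.exp_mul, ← Real.exp_mul, mul_mul_mul_comm, ← Real.rpow_add hc, hab, Real.rpow_one,
      ← Real.exp_add, mul_assoc, ← Real.exp_add]
    obtain rfl : b = 1 - a := by linarith
    congr 2
    simp only [NNReal.coe_one]
    ring
  calc (gaussianPDF 0 1 x * f x) ^ a * (gaussianPDF 0 1 y * g y) ^ b
      = gaussianPDF 0 1 (a * x + b * y) *
        (f x ^ a * g y ^ b * ENNReal.ofReal (Real.exp (-(a * b / 2 * (x - y) ^ 2)))) := by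
        rw [ENNReal.mul_rpow_of_nonneg _ _ ha.le, ENNReal.mul_rpow_of_nonneg _ _ hb.le,
          mul_mul_mul_comm, hpdf]
        ring
    _ ≤ gaussianPDF 0 1 (a * x + b * y) := mul_le_of_le_one_right' (hfg x y)

/-- The Prékopa-Leindler inequality relative to the standard Gaussian measure on `ℝⁿ`. -/
theorem pi_gaussianReal_infConv {a b : ℝ} (ha : 0 < a) (hb : 0 < b) (hab : a + b = 1) (n : ℕ)
    {f g : (Fin n → ℝ) → ℝ≥0∞} (hf : Measurable f) (hg : Measurable g)
    (hfg : ∀ x y, f x ^ a * g y ^ b *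
      ENNReal.ofReal (Real.exp (-(a * b / 2 * ∑ i, (x i - y i) ^ 2))) ≤ 1) :
    (∫⁻ x, f x ∂Measure.pi fun _ => gaussianReal 0 1) ^ a *
      (∫⁻ x, g x ∂Measure.pi fun _ => gaussianReal 0 1) ^ b ≤ 1 := by
  induction n with
  | zero =>
    have hd : ∀ u : (Fin 0 → ℝ) → ℝ≥0∞,
        ∫⁻ x, u x ∂Measure.pi (fun _ => gaussianReal 0 1) = u 0 := fun u => by
      rw [Measure.pi_of_empty _ 0, lintegral_dirac]
    simpa [hd] using hfg 0 0
  | succ n ih =>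
    have hd : ∀ {u : (Fin (n + 1) → ℝ) → ℝ≥0∞}, Measurable u →
        ∫⁻ x, u x ∂Measure.pi (fun _ => gaussianReal 0 1) =
          ∫⁻ s, ∫⁻ x, u (Fin.cons s x) ∂Measure.pi (fun _ => gaussianReal 0 1)
            ∂gaussianReal 0 1 := fun {u} hu => by
      have hmp := (measurePreserving_piFinSuccAbove
        (fun _ : Fin (n + 1) => gaussianReal 0 1) 0).symm
      rw [← hmp.lintegral_comp hu, lintegral_prod _ (by fun_prop)]
      simp [MeasurableEquiv.piFinSuccAbove, Fin.consEquiv]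
    have hcons : Measurable fun p : ℝ × (Fin n → ℝ) => (Fin.cons p.1 p.2 : Fin (n + 1) → ℝ) :=
      measurable_pi_iff.2 <| Fin.cases (by simpa using measurable_fst)
        fun j => by simpa using! (measurable_pi_apply j).comp measurable_snd
    rw [hd hf, hd hg]
    refine gaussianReal_infConv ha hb hab (hf.comp hcons).lintegral_prod_right'
      (hg.comp hcons).lintegral_prod_right' fun s t => ?_
    set e := Real.exp (-(a * b / 2 * (s - t) ^ 2)) 
    have he0 : 0 < e := Real.exp_pos _
    have hpow : (ENNReal.ofReal (e ^ b⁻¹)) ^ b = ENNReal.ofReal e := by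
      rw [ENNReal.ofReal_rpow_of_nonneg (by positivity) hb.le, Real.rpow_inv_rpow he0.le hb.ne']
    have := ih (f := fun x => f (Fin.cons s x))
      (g := fun x => g (Fin.cons t x) * ENNReal.ofReal (e ^ b⁻¹))
      (hf.comp (hcons.comp measurable_prodMk_left))
      ((hg.comp (hcons.comp measurable_prodMk_left)).mul_const _) (fun x y => by
        refine le_trans (le_of_eq ?_) (hfg (Fin.cons s x) (Fin.cons t y))
        rw [ENNReal.mul_rpow_of_nonneg _ _ hb.le, hpow, Fin.sum_univ_succ]
        simp only [Fin.cons_zero, Fin.cons_succ, mul_add, neg_add, Real.exp_add]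
        rw [ENNReal.ofReal_mul he0.le]
        ring)
    have hgt : Measurable fun x : Fin n → ℝ => g (Fin.cons t x) :=
      hg.comp (hcons.comp measurable_prodMk_left)
    rw [lintegral_mul_const _ hgt, ENNReal.mul_rpow_of_nonneg _ _ hb.le, hpow, ← mul_assoc] at this
    exact this

/-- A Gaussian bound on the exponential moments of a centred 1-Lipschitz function. The sharp bound is
the limit `a → 1`. -/
theorem lintegral_exp_lipschitz_le {n : ℕ} {a b : ℝ} (ha : 0 < a) (hb : 0 < b) (hab : a + b = 1)
    {V : EuclideanSpace ℝ (Fin n) → ℝ} (hV : LipschitzWith 1 V) (l : ℝ)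
    (hint : Integrable V (stdGaussian (EuclideanSpace ℝ (Fin n))))
    (hmean : ∫ x, V x ∂stdGaussian (EuclideanSpace ℝ (Fin n)) = 0) :
    ∫⁻ x, ENNReal.ofReal (Real.exp (l * V x - l ^ 2 / (2 * a)))
      ∂stdGaussian (EuclideanSpace ℝ (Fin n)) ≤ 1 := by
  have hVc := hV.continuous
  have hpush : ∀ {u : EuclideanSpace ℝ (Fin n) → ℝ≥0∞}, Measurable u →
      ∫⁻ x, u x ∂stdGaussian (EuclideanSpace ℝ (Fin n)) =
        ∫⁻ x, u (WithLp.toLp 2 x) ∂Measure.pi fun _ : Fin n => gaussianReal 0 1 := fun hu => by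
    rw [← map_pi_eq_stdGaussian, lintegral_map hu (by fun_prop)]
  set c := -(b / a * l) with hc
  have hf : Measurable fun x => ENNReal.ofReal (Real.exp (c * V x)) := by fun_prop
  have hg : Measurable fun x => ENNReal.ofReal (Real.exp (l * V x - l ^ 2 / (2 * a))) := by
    fun_prop
  have key := pi_gaussianReal_infConv ha hb hab n
    (hf.comp (WithLp.measurable_toLp 2 _)) (hg.comp (WithLp.measurable_toLp 2 _)) (by
      intro x y
      simp only [Function.comp_apply]
      rw [ENNReal.ofReal_rpow_of_pos (Real.exp_pos _), ENNReal.ofReal_rpow_of_pos (Real.exp_pos _),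
        ← ENNReal.ofReal_mul (by positivity), ← ENNReal.ofReal_mul (by positivity),
        ← Real.exp_mul, ← Real.exp_mul, ← Real.exp_add, ← Real.exp_add, ENNReal.ofReal_le_one,
        Real.exp_le_one_iff]
      have hd := hV.dist_le_mul (WithLp.toLp 2 x) (WithLp.toLp 2 y)
      rw [NNReal.coe_one, one_mul, Real.dist_eq] at hd
      have hsum : ∑ i, (x i - y i) ^ 2 = dist (WithLp.toLp 2 x) (WithLp.toLp 2 y) ^ 2 := by
        rw [EuclideanSpace.dist_eq, Real.sq_sqrt (by positivity)]
        simp [Real.dist_eq]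
      rw [hsum]
      set d := dist (WithLp.toLp 2 x) (WithLp.toLp 2 y)
      set v := V (WithLp.toLp 2 x)
      set w := V (WithLp.toLp 2 y)
      have hd2 : (v - w) ^ 2 ≤ d ^ 2 := by
        rw [← sq_abs]; gcongr
      have e : c * v * a + (l * w - l ^ 2 / (2 * a)) * b + -(a * b / 2 * d ^ 2) =
          -(b / (2 * a)) * ((l + a * (v - w)) ^ 2 + a ^ 2 * (d ^ 2 - (v - w) ^ 2)) := by
        rw [hc]; field_simp; ring
      rw [e, neg_mul, neg_nonpos]
      have := mul_nonneg (sq_nonneg a) (sub_nonneg.2 hd2)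
      positivity)
  simp only [Function.comp_apply] at key
  rw [← hpush hf, ← hpush hg] at key
  have hone : 1 ≤ ∫⁻ x, ENNReal.ofReal (Real.exp (c * V x))
      ∂stdGaussian (EuclideanSpace ℝ (Fin n)) := by
    have hlin : ∫ x, (c * V x + 1) ∂stdGaussian (EuclideanSpace ℝ (Fin n)) = 1 := by
      rw [integral_add (hint.const_mul _) (integrable_const _), integral_const_mul, hmean]
      simp
    calc (1 : ℝ≥0∞) = ENNReal.ofReal (∫ x, (c * V x + 1)
          ∂stdGaussian (EuclideanSpace ℝ (Fin n))) := by simp [hlin]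
      _ ≤ ∫⁻ x, ENNReal.ofReal (c * V x + 1) ∂stdGaussian (EuclideanSpace ℝ (Fin n)) := by
        have hi : Integrable (fun x => c * V x + 1) (stdGaussian (EuclideanSpace ℝ (Fin n))) :=
          (hint.const_mul c).add (integrable_const 1)
        rw [integral_eq_lintegral_pos_part_sub_lintegral_neg_part hi]
        exact (ENNReal.ofReal_le_ofReal (sub_le_self _ ENNReal.toReal_nonneg)).trans
          ENNReal.ofReal_toReal_le
      _ ≤ _ := lintegral_mono fun x => ENNReal.ofReal_le_ofReal (Real.add_one_le_exp _)
  have hpow := (le_mul_of_one_le_left' (ENNReal.one_le_rpow hone ha)).trans key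
  exact not_lt.1 fun h => hpow.not_gt (ENNReal.one_lt_rpow h hb)

/-- Gaussian concentration for 1-Lipschitz functions, stated for `stdGaussian`. -/
theorem stdGaussian_lipschitz_tail {n : ℕ} {V : EuclideanSpace ℝ (Fin n) → ℝ}
    (hV : LipschitzWith 1 V) {t : ℝ} (ht : 0 ≤ t) :
    stdGaussian (EuclideanSpace ℝ (Fin n))
      {z | ∫ w, V w ∂stdGaussian (EuclideanSpace ℝ (Fin n)) + t ≤ V z} ≤
        ENNReal.ofReal (Real.exp (-t ^ 2 / 2)) := by
  have hint : Integrable V (stdGaussian (EuclideanSpace ℝ (Fin n))) := by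
    refine ((IsGaussian.integrable_id.norm).add (integrable_const ‖V 0‖)).mono'
      hV.continuous.aestronglyMeasurable (.of_forall fun x => ?_)
    have := hV.norm_sub_le x 0
    simp only [NNReal.coe_one, one_mul, sub_zero] at this
    have h2 := norm_add_le (V x - V 0) (V 0)
    rw [sub_add_cancel] at h2
    simp only [Pi.add_apply, id]
    linarith
  set m := ∫ w, V w ∂stdGaussian (EuclideanSpace ℝ (Fin n)) with hm
  have hW : LipschitzWith 1 fun x => V x - m := by
    simpa using hV.sub (LipschitzWith.const m)
  have hWmean : ∫ x, (V x - m) ∂stdGaussian (EuclideanSpace ℝ (Fin n)) = 0 := by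
    rw [integral_sub hint (integrable_const _)]
    simp [hm]
  have hVc := hV.continuous
  have bound : ∀ a ∈ Set.Ioo (0 : ℝ) 1, stdGaussian (EuclideanSpace ℝ (Fin n)) {z | m + t ≤ V z} ≤
      ENNReal.ofReal (Real.exp (-(a * t ^ 2) / 2)) := by
    intro a ⟨ha, ha1⟩
    have h1 := lintegral_exp_lipschitz_le ha (sub_pos.2 ha1) (by ring) hW (a * t)
      (hint.sub (integrable_const _)) hWmean
    have h2 := (mul_meas_ge_le_lintegral (by fun_prop)
      (ENNReal.ofReal (Real.exp (a * t ^ 2 / 2)))).trans h1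
    have hsub : {z | m + t ≤ V z} ⊆ {z | ENNReal.ofReal (Real.exp (a * t ^ 2 / 2)) ≤
        ENNReal.ofReal (Real.exp (a * t * (V z - m) - (a * t) ^ 2 / (2 * a)))} := by
      intro z hz
      simp only [Set.mem_ofPred_eq] at hz ⊢
      refine ENNReal.ofReal_le_ofReal (Real.exp_le_exp.2 ?_)
      have e : (a * t) ^ 2 / (2 * a) = a * t ^ 2 / 2 := by field_simp
      have := mul_le_mul_of_nonneg_left (show t ≤ V z - m by linarith) (mul_nonneg ha.le ht)
      rw [e]
      linarith
    have h3 := (mul_le_mul_right (measure_mono hsub) _).trans h2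
    rw [neg_div, Real.exp_neg, ENNReal.ofReal_inv_of_pos (Real.exp_pos _),
      ENNReal.le_inv_iff_mul_le, mul_comm]
    exact h3
  have hlim : Filter.Tendsto (fun a : ℝ => ENNReal.ofReal (Real.exp (-(a * t ^ 2) / 2)))
      (nhdsWithin 1 (Set.Iio 1)) (nhds (ENNReal.ofReal (Real.exp (-t ^ 2 / 2)))) := by
    have hcont : Continuous fun a : ℝ => ENNReal.ofReal (Real.exp (-(a * t ^ 2) / 2)) :=
      ENNReal.continuous_ofReal.comp (by fun_prop)
    simpa using (hcont.tendsto 1).mono_left nhdsWithin_le_nhds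
  refine ge_of_tendsto hlim ?_
  filter_upwards [Ioo_mem_nhdsLT (zero_lt_one (α := ℝ))] with a ha using bound a ha

/-- Gaussian concentration for Lipschitz functions: if `V : ℝ^n → ℝ` is 1-Lipschitz and `Z`
is a standard Gaussian vector in `ℝ^n`, then `P(V(Z) ≥ E[V(Z)] + t) ≤ exp(−t²/2)` for
every `t ≥ 0`. -/
theorem stmt_9 {n : ℕ} (V : EuclideanSpace ℝ (Fin n) → ℝ) (hV : LipschitzWith 1 V)
    (μ : Measure (EuclideanSpace ℝ (Fin n)))
    (hμ : μ = Measure.map (WithLp.equiv 2 (Fin n → ℝ)).symm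
      (Measure.pi fun _ : Fin n => gaussianReal 0 1))
    (t : ℝ) (ht : 0 ≤ t) :
    μ {z | ∫ w, V w ∂μ + t ≤ V z} ≤ ENNReal.ofReal (Real.exp (-t ^ 2 / 2)) := by
  have hstd : μ = stdGaussian (EuclideanSpace ℝ (Fin n)) := hμ.trans map_pi_eq_stdGaussian
  subst hstd
  exact stdGaussian_lipschitz_tail hV ht
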